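/- Every nonzero 2-dimensional commutative pre-Lie algebra (C, ·, ∘) over ℂ is isomorphic to one of the following algebras, given on a basis e1, e2 (all unlisted products of basis elements, other than those forced by commutativity of ·, are zero): with · ≡ 0: the pre-Lie algebras C01: e1∘e1 = e1 + e2, e2∘e1 = e2; C02: e1∘e1 = e1 + e2, e1∘e2 = e2; C03: e1∘e1 = e2; C04: e2∘e1 = e1; C05^α: e1∘e1 = e1, e1∘e2 = α·e2; C06^α: e1∘e1 = e1, e1∘e2 = α·e2, e2∘e1 = e2; C07: e1∘e1 = e1, e2∘e2 = e2; C08: e1∘e1 = e1, e1∘e2 = 2·e2, e2∘e1 = (1/2)·e1 + e2, e2∘e2 = e2; and (α ∈ ℂ): C09: e1·e1 = e1, e2·e2 = e2, ∘ ≡ 0; C10^α: e1·e1 = e1, e1·e2 = e2, e1∘e2 = α·e2; C11: e1·e1 = e1, e1·e2 = e2, e2∘e2 = e2; C12^α: e1·e1 = e1, e1∘e2 = α·e2; C13: e1·e1 = e1, e2∘e2 = e2; C14: e1·e1 = e2, e1∘e1 = e1, e1∘e2 = 2·e2; C15^α: e1·e1 = e2, e1∘e1 = α·e1, e1∘e2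 = 2α·e2, e2∘e1 = e1 + α·e2, e2∘e2 = 2·e2; C16: e1·e1 = e2, e1∘e1 = e1, e1∘e2 = 2·e2, e2∘e1 = e2; C17^α: e1·e1 = e2, e1∘e1 = α·e2. Moreover, among the algebras C09–C17 the only nontrivial isomorphism is C15^α ≅ C15^{−α}. -/

import Mathlib

noncomputable section

/-- The 2-dimensional complex vector space. -/
abbrev V2 : Type := Fin 2 → ℂ

/-- The bilinear multiplication on `V2` determined by a table of structure constants:
`c i j` is the product of the `i`-th and `j`-th basis vectors. -/
def tm (c : Fin 2 → Fin 2 → V2) : V2 → V2 → V2 :=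
  fun x y => ∑ i, ∑ j, (x i * y j) • c i j

/-- Multiplication table with the given values of `e1*e1`, `e1*e2`, `e2*e1`, `e2*e2`. -/
def tbl (a b c d : V2) : Fin 2 → Fin 2 → V2 := ![![a, b], ![c, d]]

/-- The zero multiplication on `V2`. -/
def zm : V2 → V2 → V2 := fun _ _ => 0

/-- Isomorphism of algebras with one multiplication: a ℂ-linear bijection preserving
the multiplication. -/
def Iso1 {A : Type*} [AddCommGroup A] [Module ℂ A] {B : Type*} [AddCommGroup B]
    [Module ℂ B] (μ : A → A → A) (ν : B → B → B) : Prop :=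
  ∃ φ : A ≃ₗ[ℂ] B, ∀ x y, φ (μ x y) = ν (φ x) (φ y)

/-- Isomorphism of algebras with two multiplications: a ℂ-linear bijection preserving
both multiplications. -/
def Iso2 {A : Type*} [AddCommGroup A] [Module ℂ A] {B : Type*} [AddCommGroup B]
    [Module ℂ B] (μ₁ μ₂ : A → A → A) (ν₁ ν₂ : B → B → B) : Prop :=
  ∃ φ : A ≃ₗ[ℂ] B,
    (∀ x y, φ (μ₁ x y) = ν₁ (φ x) (φ y)) ∧ (∀ x y, φ (μ₂ x y) = ν₂ (φ x) (φ y))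

/-- The commutative associative algebra A01: `e1·e1 = e1`, `e2·e2 = e2`. -/
def cA01 : Fin 2 → Fin 2 → V2 := tbl ![1,0] 0 0 ![0,1]

/-- The commutative associative algebra A02: `e1·e1 = e1`, `e1·e2 = e2·e1 = e2`. -/
def cA02 : Fin 2 → Fin 2 → V2 := tbl ![1,0] ![0,1] ![0,1] 0

/-- The commutative associative algebra A03: `e1·e1 = e1`. -/
def cA03 : Fin 2 → Fin 2 → V2 := tbl ![1,0] 0 0 0

/-- The commutative associative algebra A04: `e1·e1 = e2`. -/
def cA04 : Fin 2 → Fin 2 → V2 := tbl ![0,1] 0 0 0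

/-- Index of the nonzero 2-dimensional pre-Lie algebras C01–C08. -/
inductive PLIdx : Type
  | c01 | c02 | c03 | c04
  | c05 (α : ℂ)
  | c06 (α : ℂ)
  | c07 | c08

/-- The multiplication tables of the nonzero 2-dimensional pre-Lie algebras C01–C08. -/
def plAlg : PLIdx → Fin 2 → Fin 2 → V2
  | .c01 => tbl ![1,1] 0 ![0,1] 0            -- e1∘e1 = e1+e2, e2∘e1 = e2
  | .c02 => tbl ![1,1] ![0,1] 0 0            -- e1∘e1 = e1+e2, e1∘e2 = e2
  | .c03 => tbl ![0,1] 0 0 0                 -- e1∘e1 = e2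
  | .c04 => tbl 0 0 ![1,0] 0                 -- e2∘e1 = e1
  | .c05 α => tbl ![1,0] ![0,α] 0 0          -- e1∘e1 = e1, e1∘e2 = α e2
  | .c06 α => tbl ![1,0] ![0,α] ![0,1] 0     -- e1∘e1 = e1, e1∘e2 = α e2, e2∘e1 = e2
  | .c07 => tbl ![1,0] 0 0 ![0,1]            -- e1∘e1 = e1, e2∘e2 = e2
  | .c08 => tbl ![1,0] ![0,2] ![1/2,1] ![0,1]

/-- Index of the commutative pre-Lie algebras C09–C17 with nontrivial commutative
associative multiplication. -/
inductive CPIdx : Type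
  | c09
  | c10 (α : ℂ)
  | c11
  | c12 (α : ℂ)
  | c13
  | c14
  | c15 (α : ℂ)
  | c16
  | c17 (α : ℂ)

/-- The commutative associative multiplication of C09–C17. -/
def cpMul : CPIdx → Fin 2 → Fin 2 → V2
  | .c09 => cA01
  | .c10 _ => cA02
  | .c11 => cA02
  | .c12 _ => cA03
  | .c13 => cA03
  | .c14 => cA04
  | .c15 _ => cA04
  | .c16 => cA04
  | .c17 _ => cA04

/-- The pre-Lie multiplication of C09–C17. -/
def cpCirc : CPIdx → Fin 2 → Fin 2 → V2
  | .c09 => tbl 0 0 0 0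
  | .c10 α => tbl 0 ![0,α] 0 0               -- e1∘e2 = α e2
  | .c11 => tbl 0 0 0 ![0,1]                 -- e2∘e2 = e2
  | .c12 α => tbl 0 ![0,α] 0 0               -- e1∘e2 = α e2
  | .c13 => tbl 0 0 0 ![0,1]                 -- e2∘e2 = e2
  | .c14 => tbl ![1,0] ![0,2] 0 0            -- e1∘e1 = e1, e1∘e2 = 2e2
  | .c15 α => tbl ![α,0] ![0,2*α] ![1,α] ![0,2]
  | .c16 => tbl ![1,0] ![0,2] ![0,1] 0
  | .c17 α => tbl ![0,α] 0 0 0               -- e1∘e1 = α e2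

/-- The bilinear map `m` has multiplication table `c` in the basis `b`. -/
def HasTable {C : Type*} [AddCommGroup C] [Module ℂ C] (m : C →ₗ[ℂ] C →ₗ[ℂ] C)
    (b : Module.Basis (Fin 2) ℂ C) (c : Fin 2 → Fin 2 → V2) : Prop :=
  ∀ i j, m (b i) (b j) = c i j 0 • b 0 + c i j 1 • b 1

/-- The rows of `Q` multiply under `tm c` according to the table `d`. -/
def IsTableHom (Q : Fin 2 → V2) (d c : Fin 2 → Fin 2 → V2) : Prop :=
  ∀ i j : Fin 2, tm c (Q i) (Q j) = d i j 0 • Q 0 + d i j 1 • Q 1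

theorem tm_tbl_apply (a a' b b' c c' d d' x x' y y' : ℂ) :
    tm (tbl ![a, a'] ![b, b'] ![c, c'] ![d, d']) ![x, x'] ![y, y'] =
      ![x * y * a + x * y' * b + x' * y * c + x' * y' * d,
        x * y * a' + x * y' * b' + x' * y * c' + x' * y' * d'] := by
  ext k
  fin_cases k <;> simp [tm, tbl, Fin.sum_univ_two] <;> ring

theorem v2_zero_eq : (0 : V2) = ![0, 0] := by
  ext k
  fin_cases k <;> rfl

theorem tm_zero : tm (tbl 0 0 0 0) = zm := by
  ext x y k
  simp [tm, tbl, zm, Fin.sum_univ_two]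

theorem isTableHom_tbl {p q r s a₀ a₁ b₀ b₁ c₀ c₁ d₀ d₁ a₀' a₁' b₀' b₁' c₀' c₁' d₀' d₁' : ℂ} :
    IsTableHom ![![p, q], ![r, s]] (tbl ![a₀', a₁'] ![b₀', b₁'] ![c₀', c₁'] ![d₀', d₁'])
      (tbl ![a₀, a₁] ![b₀, b₁] ![c₀, c₁] ![d₀, d₁]) ↔
    (p * p * a₀ + p * q * b₀ + q * p * c₀ + q * q * d₀ = a₀' * p + a₁' * r ∧
      p * p * a₁ + p * q * b₁ + q * p * c₁ + q * q * d₁ = a₀' * q + a₁' * s) ∧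
    (p * r * a₀ + p * s * b₀ + q * r * c₀ + q * s * d₀ = b₀' * p + b₁' * r ∧
      p * r * a₁ + p * s * b₁ + q * r * c₁ + q * s * d₁ = b₀' * q + b₁' * s) ∧
    (r * p * a₀ + r * q * b₀ + s * p * c₀ + s * q * d₀ = c₀' * p + c₁' * r ∧
      r * p * a₁ + r * q * b₁ + s * p * c₁ + s * q * d₁ = c₀' * q + c₁' * s) ∧
    (r * r * a₀ + r * s * b₀ + s * r * c₀ + s * s * d₀ = d₀' * p + d₁' * r ∧
      r * r * a₁ + r * s * b₁ + s * r * c₁ + s * s * d₁ = d₀' * q + d₁' * s) := by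
  simp only [IsTableHom, Fin.forall_fin_two, Matrix.cons_val_zero, Matrix.cons_val_one,
    tm_tbl_apply, funext_iff]
  simp [tbl, and_assoc]

theorem Iso2.exists_isTableHom {c d c' d' : Fin 2 → Fin 2 → V2}
    (h : Iso2 (tm c) (tm d) (tm c') (tm d')) :
    ∃ p q r s : ℂ, p * s - q * r ≠ 0 ∧ IsTableHom ![![p, q], ![r, s]] c c' ∧
      IsTableHom ![![p, q], ![r, s]] d d' := by
  obtain ⟨φ, h₁, h₂⟩ := h
  have hrow : ∀ v : V2, ![v 0, v 1] = v := fun v => by ext k; fin_cases k <;> rfl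
  have hφ : ∀ v : V2, φ v = v 0 • φ ![1, 0] + v 1 • φ ![0, 1] := by
    intro v
    rw [← map_smul, ← map_smul, ← map_add]
    congr 1
    ext k
    fin_cases k <;> simp
  have hom : ∀ e e' : Fin 2 → Fin 2 → V2, (∀ x y, φ (tm e x y) = tm e' (φ x) (φ y)) →
      IsTableHom ![φ ![1, 0], φ ![0, 1]] e e' := by
    intro e e' he i j
    have hb : ∀ i : Fin 2, (![φ ![1, 0], φ ![0, 1]] : Fin 2 → V2) i =
        φ ((![![1, 0], ![0, 1]] : Fin 2 → V2) i) := fun i => by fin_cases i <;> rfl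
    rw [hb, hb, ← he, hφ]
    fin_cases i <;> fin_cases j <;> simp [tm, Fin.sum_univ_two]
  refine ⟨φ ![1, 0] 0, φ ![1, 0] 1, φ ![0, 1] 0, φ ![0, 1] 1, ?_, ?_, ?_⟩
  · intro h0
    have key : ∀ x y : ℂ, x • φ ![1, 0] + y • φ ![0, 1] = 0 → x = 0 ∧ y = 0 := by
      intro x y hxy
      have : φ ![x, y] = 0 := by rw [hφ]; simpa using hxy
      have := φ.map_eq_zero_iff.mp this
      exact ⟨congrFun this 0, congrFun this 1⟩
    have k₁ := key (φ ![0, 1] 1) (-φ ![1, 0] 1) (by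
      ext k
      fin_cases k
      · simp; linear_combination h0
      · simp; ring)
    have k₂ := key (-φ ![0, 1] 0) (φ ![1, 0] 0) (by
      ext k
      fin_cases k
      · simp; ring
      · simp; linear_combination h0)
    have k₃ := key 1 0 (by
      ext k
      fin_cases k <;> simp [k₂.2, neg_eq_zero.mp k₁.2])
    exact one_ne_zero k₃.1
  · rw [hrow, hrow]
    exact hom _ _ h₁
  · rw [hrow, hrow]
    exact hom _ _ h₂

section Tables

variable {C : Type*} [AddCommGroup C] [Module ℂ C]

theorem HasTable.equivFun_apply {m : C →ₗ[ℂ] C →ₗ[ℂ] C} {b : Module.Basis (Fin 2) ℂ C}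
    {c : Fin 2 → Fin 2 → V2} (h : HasTable m b c) (x y : C) :
    b.equivFun (m x y) = tm c (b.equivFun x) (b.equivFun y) := by
  have hb : ∀ x : C, x = b.equivFun x 0 • b 0 + b.equivFun x 1 • b 1 := fun x => by
    conv_lhs => rw [← b.sum_equivFun x, Fin.sum_univ_two]
  have hv : ∀ i j, b.equivFun (m (b i) (b j)) = c i j := fun i j => by
    rw [h i j]
    ext k
    fin_cases k <;> simp
  conv_lhs => rw [hb x, hb y]
  simp only [map_add, map_smul, LinearMap.add_apply, LinearMap.smul_apply, hv]
  ext k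
  simp only [tm, Fin.sum_univ_two, Pi.add_apply, Pi.smul_apply, smul_eq_mul]
  ring

theorem HasTable.iso2 {m₁ m₂ : C →ₗ[ℂ] C →ₗ[ℂ] C} {b : Module.Basis (Fin 2) ℂ C}
    {c d : Fin 2 → Fin 2 → V2} (hc : HasTable m₁ b c) (hd : HasTable m₂ b d) :
    Iso2 (fun x y => m₁ x y) (fun x y => m₂ x y) (tm c) (tm d) :=
  ⟨b.equivFun, hc.equivFun_apply, hd.equivFun_apply⟩

theorem hasTable_of_mul_eq {m : C →ₗ[ℂ] C →ₗ[ℂ] C} {b : Module.Basis (Fin 2) ℂ C}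
    {a₀ a₁ b₀ b₁ c₀ c₁ d₀ d₁ : ℂ}
    (ha : m (b 0) (b 0) = a₀ • b 0 + a₁ • b 1) (hb : m (b 0) (b 1) = b₀ • b 0 + b₁ • b 1)
    (hc : m (b 1) (b 0) = c₀ • b 0 + c₁ • b 1) (hd : m (b 1) (b 1) = d₀ • b 0 + d₁ • b 1) :
    HasTable m b (tbl ![a₀, a₁] ![b₀, b₁] ![c₀, c₁] ![d₀, d₁]) := by
  intro i j
  fin_cases i <;> fin_cases j <;> simpa [tbl]

theorem exists_hasTable (m : C →ₗ[ℂ] C →ₗ[ℂ] C) (b : Module.Basis (Fin 2) ℂ C) :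
    ∃ a₀ a₁ b₀ b₁ c₀ c₁ d₀ d₁ : ℂ,
      HasTable m b (tbl ![a₀, a₁] ![b₀, b₁] ![c₀, c₁] ![d₀, d₁]) := by
  have hb : ∀ x : C, x = b.equivFun x 0 • b 0 + b.equivFun x 1 • b 1 := fun x => by
    conv_lhs => rw [← b.sum_equivFun x, Fin.sum_univ_two]
  exact ⟨_, _, _, _, _, _, _, _, hasTable_of_mul_eq (hb _) (hb _) (hb _) (hb _)⟩

theorem exists_basis_of_linearIndependent (hdim : Module.finrank ℂ C = 2) {u v : C}
    (h : LinearIndependent ℂ ![u, v]) :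
    ∃ b : Module.Basis (Fin 2) ℂ C, b 0 = u ∧ b 1 = v := by
  refine ⟨basisOfLinearIndependentOfCardEqFinrank h (by simp [hdim]), ?_, ?_⟩ <;> simp

theorem exists_basis_change (b : Module.Basis (Fin 2) ℂ C) {p q r s : ℂ}
    (hdet : p * s - q * r ≠ 0) :
    ∃ b' : Module.Basis (Fin 2) ℂ C, b' 0 = p • b 0 + q • b 1 ∧ b' 1 = r • b 0 + s • b 1 ∧
      ∀ m : C →ₗ[ℂ] C →ₗ[ℂ] C, ∀ c c' : Fin 2 → Fin 2 → V2,
      HasTable m b c → IsTableHom ![![p, q], ![r, s]] c' c → HasTable m b' c' := by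
  have hdim : Module.finrank ℂ C = 2 := by simp [Module.finrank_eq_card_basis b]
  have hli : LinearIndependent ℂ ![p • b 0 + q • b 1, r • b 0 + s • b 1] := by
    rw [LinearIndependent.pair_iff]
    intro x y hxy
    have hb := LinearIndependent.pair_iff.mp (show LinearIndependent ℂ ![b 0, b 1] by
      convert b.linearIndependent using 1
      ext k
      fin_cases k <;> rfl)
    obtain ⟨h₁, h₂⟩ := hb (x * p + y * r) (x * q + y * s) (by rw [← hxy]; module)
    constructor
    · refine (mul_eq_zero.mp (?_ : x * (p * s - q * r) = 0)).resolve_right hdet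
      linear_combination s * h₁ - r * h₂
    · refine (mul_eq_zero.mp (?_ : y * (p * s - q * r) = 0)).resolve_right hdet
      linear_combination p * h₂ - q * h₁
  obtain ⟨b', h0, h1⟩ := exists_basis_of_linearIndependent hdim hli
  refine ⟨b', h0, h1, fun m c c' hc hQ i j => ?_⟩
  have hrow : ∀ i, b.equivFun (b' i) = (![![p, q], ![r, s]] : Fin 2 → V2) i := fun i => by
    ext k
    fin_cases i <;> fin_cases k <;> simp [h0, h1]
  apply b.equivFun.injective
  rw [hc.equivFun_apply, hrow, hrow, hQ i j, map_add, map_smul, map_smul, hrow, hrow]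

theorem HasTable.comm_apply {m : C →ₗ[ℂ] C →ₗ[ℂ] C} {b : Module.Basis (Fin 2) ℂ C}
    {c : Fin 2 → Fin 2 → V2} (h : HasTable m b c) (hcomm : ∀ x y, m x y = m y x) (x y : V2) :
    tm c x y = tm c y x := by
  obtain ⟨x, rfl⟩ := b.equivFun.surjective x
  obtain ⟨y, rfl⟩ := b.equivFun.surjective y
  simp only [← h.equivFun_apply, hcomm x y]

theorem HasTable.assoc_apply {m : C →ₗ[ℂ] C →ₗ[ℂ] C} {b : Module.Basis (Fin 2) ℂ C}
    {c : Fin 2 → Fin 2 → V2} (h : HasTable m b c)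
    (hassoc : ∀ x y z, m (m x y) z = m x (m y z)) (x y z : V2) :
    tm c (tm c x y) z = tm c x (tm c y z) := by
  obtain ⟨x, rfl⟩ := b.equivFun.surjective x
  obtain ⟨y, rfl⟩ := b.equivFun.surjective y
  obtain ⟨z, rfl⟩ := b.equivFun.surjective z
  simp only [← h.equivFun_apply, hassoc]

theorem HasTable.preLie_apply {m : C →ₗ[ℂ] C →ₗ[ℂ] C} {b : Module.Basis (Fin 2) ℂ C}
    {c : Fin 2 → Fin 2 → V2} (h : HasTable m b c)
    (hpre : ∀ x y z, m (m x y) z - m (m y x) z = m x (m y z) - m y (m x z)) (x y z : V2) :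
    tm c (tm c x y) z - tm c (tm c y x) z = tm c x (tm c y z) - tm c y (tm c x z) := by
  obtain ⟨x, rfl⟩ := b.equivFun.surjective x
  obtain ⟨y, rfl⟩ := b.equivFun.surjective y
  obtain ⟨z, rfl⟩ := b.equivFun.surjective z
  simp only [← h.equivFun_apply, ← map_sub, hpre]

theorem HasTable.compat_apply {m m' : C →ₗ[ℂ] C →ₗ[ℂ] C} {b : Module.Basis (Fin 2) ℂ C}
    {c d : Fin 2 → Fin 2 → V2} (hc : HasTable m b c) (hd : HasTable m' b d)
    (hcompat : ∀ x y z, m' x (m y z) = m (m' x y) z + m y (m' x z)) (x y z : V2) :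
    tm d x (tm c y z) = tm c (tm d x y) z + tm c y (tm d x z) := by
  obtain ⟨x, rfl⟩ := b.equivFun.surjective x
  obtain ⟨y, rfl⟩ := b.equivFun.surjective y
  obtain ⟨z, rfl⟩ := b.equivFun.surjective z
  simp only [← hc.equivFun_apply, ← hd.equivFun_apply, ← map_add, hcompat]

theorem exists_basis_of_idempotent (hdim : Module.finrank ℂ C = 2) {m : C →ₗ[ℂ] C →ₗ[ℂ] C}
    (hcomm : ∀ x y, m x y = m y x) (hassoc : ∀ x y z, m (m x y) z = m x (m y z))
    {e : C} (he₀ : e ≠ 0) (he : m e e = e) :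
    ∃ b : Module.Basis (Fin 2) ℂ C, HasTable m b cA01 ∨ HasTable m b cA02 ∨ HasTable m b cA03 := by
  obtain ⟨y, hy⟩ := exists_linearIndependent_pair_of_one_lt_finrank (R := ℂ) (by omega) he₀
  obtain ⟨b, rfl, rfl⟩ := exists_basis_of_linearIndependent hdim hy
  obtain ⟨_, _, α, β, α', β', γ, δ, ht⟩ := exists_hasTable m b
  replace ht : HasTable m b (tbl ![1, 0] ![α, β] ![α', β'] ![γ, δ]) :=
    hasTable_of_mul_eq (by simpa using he) (ht 0 1) (ht 1 0) (ht 1 1)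
  have hc := ht.comm_apply hcomm ![1, 0] ![0, 1]
  have h₁ := ht.assoc_apply hassoc ![1, 0] ![1, 0] ![0, 1]
  have h₂ := ht.assoc_apply hassoc ![1, 0] ![0, 1] ![0, 1]
  simp only [tm_tbl_apply, Matrix.vecCons_inj] at hc h₁ h₂
  simp at hc h₁ h₂
  obtain ⟨rfl, rfl⟩ := hc
  simp only [cA01, cA02, cA03, v2_zero_eq]
  have hβ : β = 0 ∨ β = 1 := by grind
  rcases hβ with rfl | rfl
  · rcases eq_or_ne δ 0 with rfl | hδ
    · obtain ⟨b', -, -, hb'⟩ := exists_basis_change b (p := 1) (q := 0) (r := -α) (s := 1) (by simp)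
      refine ⟨b', Or.inr (Or.inr (hb' m _ _ ht ?_))⟩
      rw [isTableHom_tbl]
      grind
    · obtain ⟨b', -, -, hb'⟩ := exists_basis_change b (p := 1) (q := 0) (r := -α / δ) (s := 1 / δ)
        (by simpa)
      refine ⟨b', Or.inl (hb' m _ _ ht ?_)⟩
      rw [isTableHom_tbl]
      grind
  · obtain rfl : α = 0 := by grind
    rcases eq_or_ne (γ + δ ^ 2 / 4) 0 with hγ | hγ
    · obtain ⟨b', -, -, hb'⟩ :=
        exists_basis_change b (p := 1) (q := 0) (r := -δ / 2) (s := 1) (by simp)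
      refine ⟨b', Or.inr (Or.inl (hb' m _ _ ht ?_))⟩
      rw [isTableHom_tbl]
      grind
    · obtain ⟨s, hs⟩ := IsAlgClosed.exists_pow_nat_eq (γ + δ ^ 2 / 4) two_pos
      have hs₀ : s ≠ 0 := by rintro rfl; simp_all
      obtain ⟨b', -, -, hb'⟩ := exists_basis_change b (p := 1 / 2 - δ / (4 * s)) (q := 1 / (2 * s))
        (r := 1 / 2 + δ / (4 * s)) (s := -(1 / (2 * s))) (by field_simp; grind)
      refine ⟨b', Or.inl (hb' m _ _ ht ?_)⟩
      rw [isTableHom_tbl]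
      grind

theorem exists_basis_of_comm_assoc (hdim : Module.finrank ℂ C = 2) {m : C →ₗ[ℂ] C →ₗ[ℂ] C}
    (hcomm : ∀ x y, m x y = m y x) (hassoc : ∀ x y z, m (m x y) z = m x (m y z))
    (hm : ∃ x y, m x y ≠ 0) :
    ∃ b : Module.Basis (Fin 2) ℂ C,
      HasTable m b cA01 ∨ HasTable m b cA02 ∨ HasTable m b cA03 ∨ HasTable m b cA04 := by
  suffices H : (∃ e ≠ 0, m e e = e) ∨ ∃ b : Module.Basis (Fin 2) ℂ C, HasTable m b cA04 by
    rcases H with ⟨e, he₀, he⟩ | ⟨b, hb⟩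
    · obtain ⟨b, hb⟩ := exists_basis_of_idempotent hdim hcomm hassoc he₀ he
      exact ⟨b, by tauto⟩
    · exact ⟨b, by tauto⟩
  obtain ⟨x, hx⟩ : ∃ x, m x x ≠ 0 := by
    by_contra! h
    obtain ⟨x, y, hxy⟩ := hm
    have hadd := h (x + y)
    simp only [map_add, LinearMap.add_apply, h, hcomm y x, zero_add, add_zero] at hadd
    rw [← two_smul ℂ] at hadd
    exact hxy ((smul_eq_zero_iff_right two_ne_zero).mp hadd)
  have hx₀ : x ≠ 0 := by rintro rfl; simp at hx
  by_cases hli : LinearIndependent ℂ ![x, m x x]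
  · obtain ⟨b, hb₀, hb₁⟩ := exists_basis_of_linearIndependent hdim hli
    obtain ⟨β, γ, hxxx⟩ : ∃ β γ : ℂ, m x (m x x) = β • x + γ • m x x := by
      obtain ⟨_, _, β, γ, _, _, _, _, ht⟩ := exists_hasTable m b
      exact ⟨β, γ, by simpa [tbl, hb₀, hb₁] using ht 0 1⟩
    have hxxx' : m (m x x) x = β • x + γ • m x x := by rw [hcomm, hxxx]
    have hxxxx : m (m x x) (m x x) = β • m x x + γ • (β • x + γ • m x x) := by
      rw [hassoc, hxxx, map_add, map_smul, map_smul, hxxx]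
    rcases eq_or_ne β 0 with rfl | hβ
    · rcases eq_or_ne γ 0 with rfl | hγ
      · refine Or.inr ⟨b, ?_⟩
        simp only [cA04, v2_zero_eq]
        apply hasTable_of_mul_eq <;> simp [hb₀, hb₁, hxxx, hxxx', hxxxx]
      · refine Or.inl ⟨(γ ^ 2)⁻¹ • m x x, by simp [hγ, hx], ?_⟩
        simp only [map_smul, LinearMap.smul_apply, hxxxx]
        match_scalars <;> field_simp <;> ring
    · refine Or.inl ⟨β⁻¹ • (m x x - γ • x), ?_, ?_⟩
      · intro h
        have := LinearIndependent.pair_iff.mp hli (-γ) 1 (by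
          rw [← (smul_eq_zero_iff_right (inv_ne_zero hβ)).mp h]; module)
        exact one_ne_zero this.2
      · simp only [map_smul, LinearMap.smul_apply, map_sub, LinearMap.sub_apply, hxxxx, hxxx, hxxx']
        match_scalars <;> field_simp <;> ring
  · rw [LinearIndependent.pair_iff' hx₀] at hli
    push Not at hli
    obtain ⟨a, ha⟩ := hli
    have ha₀ : a ≠ 0 := by rintro rfl; simp at ha; exact hx ha.symm
    refine Or.inl ⟨a⁻¹ • x, by simp [ha₀, hx₀], ?_⟩
    simp only [map_smul, LinearMap.smul_apply, ← ha]
    match_scalars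
    field_simp

theorem exists_cpIdx_of_cA01 {mul circ : C →ₗ[ℂ] C →ₗ[ℂ] C} {b : Module.Basis (Fin 2) ℂ C}
    (hcompat : ∀ x y z, circ x (mul y z) = mul (circ x y) z + mul y (circ x z))
    (hb : HasTable mul b cA01) :
    ∃ i, Iso2 (fun x y => mul x y) (fun x y => circ x y) (tm (cpMul i)) (tm (cpCirc i)) := by
  obtain ⟨a₀, a₁, b₀, b₁, c₀, c₁, d₀, d₁, ht⟩ := exists_hasTable circ b
  have hb' := hb
  simp only [cA01, v2_zero_eq] at hb'
  have h₁ := hb'.compat_apply ht hcompat ![1, 0] ![1, 0] ![1, 0]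
  have h₂ := hb'.compat_apply ht hcompat ![1, 0] ![0, 1] ![0, 1]
  have h₃ := hb'.compat_apply ht hcompat ![0, 1] ![1, 0] ![1, 0]
  have h₄ := hb'.compat_apply ht hcompat ![0, 1] ![0, 1] ![0, 1]
  simp [tm_tbl_apply, Matrix.vecCons_inj] at h₁ h₂ h₃ h₄
  obtain ⟨rfl, rfl⟩ := h₁
  obtain ⟨rfl, rfl⟩ := h₂
  obtain ⟨rfl, rfl⟩ := h₃
  obtain ⟨rfl, rfl⟩ := h₄
  refine ⟨.c09, hb.iso2 ?_⟩
  simpa only [cpCirc, v2_zero_eq] using ht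

theorem exists_cpIdx_of_cA02 {mul circ : C →ₗ[ℂ] C →ₗ[ℂ] C} {b : Module.Basis (Fin 2) ℂ C}
    (hpre : ∀ x y z, circ (circ x y) z - circ (circ y x) z = circ x (circ y z) - circ y (circ x z))
    (hcompat : ∀ x y z, circ x (mul y z) = mul (circ x y) z + mul y (circ x z))
    (hb : HasTable mul b cA02) :
    ∃ i, Iso2 (fun x y => mul x y) (fun x y => circ x y) (tm (cpMul i)) (tm (cpCirc i)) := by
  obtain ⟨a₀, a₁, b₀, b₁, c₀, c₁, d₀, d₁, ht⟩ := exists_hasTable circ b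
  have hb' := hb
  simp only [cA02, v2_zero_eq] at hb'
  have h₁ := hb'.compat_apply ht hcompat ![1, 0] ![1, 0] ![1, 0]
  have h₂ := hb'.compat_apply ht hcompat ![1, 0] ![0, 1] ![0, 1]
  have h₃ := hb'.compat_apply ht hcompat ![0, 1] ![1, 0] ![1, 0]
  have h₄ := hb'.compat_apply ht hcompat ![0, 1] ![0, 1] ![0, 1]
  have h₅ := ht.preLie_apply hpre ![1, 0] ![0, 1] ![0, 1]
  simp [tm_tbl_apply, Matrix.vecCons_inj] at h₁ h₂ h₃ h₄ h₅
  obtain ⟨rfl, rfl⟩ : a₀ = 0 ∧ a₁ = 0 := by grind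
  obtain ⟨rfl, rfl⟩ : c₀ = 0 ∧ c₁ = 0 := by grind
  obtain ⟨rfl, rfl⟩ : b₀ = 0 ∧ d₀ = 0 := by grind
  rcases eq_or_ne d₁ 0 with rfl | hd
  · refine ⟨.c10 b₁, hb.iso2 ?_⟩
    simpa only [cpCirc, v2_zero_eq] using ht
  · obtain rfl : b₁ = 0 := by grind
    obtain ⟨b', -, -, h⟩ :=
        exists_basis_change b (p := 1) (q := 0) (r := 0) (s := 1 / d₁) (by simpa)
    refine ⟨.c11, (h mul _ _ hb' ?_).iso2 (h circ _ _ ht ?_)⟩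
    · simp only [cpMul, cA02, v2_zero_eq, isTableHom_tbl]
      grind
    · simp only [cpCirc, v2_zero_eq, isTableHom_tbl]
      grind

theorem exists_cpIdx_of_cA03 {mul circ : C →ₗ[ℂ] C →ₗ[ℂ] C} {b : Module.Basis (Fin 2) ℂ C}
    (hpre : ∀ x y z, circ (circ x y) z - circ (circ y x) z = circ x (circ y z) - circ y (circ x z))
    (hcompat : ∀ x y z, circ x (mul y z) = mul (circ x y) z + mul y (circ x z))
    (hb : HasTable mul b cA03) :
    ∃ i, Iso2 (fun x y => mul x y) (fun x y => circ x y) (tm (cpMul i)) (tm (cpCirc i)) := by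
  obtain ⟨a₀, a₁, b₀, b₁, c₀, c₁, d₀, d₁, ht⟩ := exists_hasTable circ b
  have hb' := hb
  simp only [cA03, v2_zero_eq] at hb'
  have h₁ := hb'.compat_apply ht hcompat ![1, 0] ![1, 0] ![1, 0]
  have h₂ := hb'.compat_apply ht hcompat ![1, 0] ![1, 0] ![0, 1]
  have h₃ := hb'.compat_apply ht hcompat ![0, 1] ![1, 0] ![1, 0]
  have h₄ := hb'.compat_apply ht hcompat ![0, 1] ![1, 0] ![0, 1]
  have h₅ := ht.preLie_apply hpre ![1, 0] ![0, 1] ![0, 1]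
  simp [tm_tbl_apply, Matrix.vecCons_inj] at h₁ h₂ h₃ h₄ h₅
  obtain ⟨rfl, rfl⟩ : a₀ = 0 ∧ a₁ = 0 := by grind
  obtain ⟨rfl, rfl⟩ : c₀ = 0 ∧ c₁ = 0 := by grind
  obtain ⟨rfl, rfl⟩ : b₀ = 0 ∧ d₀ = 0 := by grind
  rcases eq_or_ne d₁ 0 with rfl | hd
  · refine ⟨.c12 b₁, hb.iso2 ?_⟩
    simpa only [cpCirc, v2_zero_eq] using ht
  · obtain rfl : b₁ = 0 := by grind
    obtain ⟨b', -, -, h⟩ :=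
        exists_basis_change b (p := 1) (q := 0) (r := 0) (s := 1 / d₁) (by simpa)
    refine ⟨.c13, (h mul _ _ hb' ?_).iso2 (h circ _ _ ht ?_)⟩
    · simp only [cpMul, cA03, v2_zero_eq, isTableHom_tbl]
      grind
    · simp only [cpCirc, v2_zero_eq, isTableHom_tbl]
      grind

theorem exists_cpIdx_of_cA04 {mul circ : C →ₗ[ℂ] C →ₗ[ℂ] C} {b : Module.Basis (Fin 2) ℂ C}
    (hpre : ∀ x y z, circ (circ x y) z - circ (circ y x) z = circ x (circ y z) - circ y (circ x z))
    (hcompat : ∀ x y z, circ x (mul y z) = mul (circ x y) z + mul y (circ x z))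
    (hb : HasTable mul b cA04) :
    ∃ i, Iso2 (fun x y => mul x y) (fun x y => circ x y) (tm (cpMul i)) (tm (cpCirc i)) := by
  obtain ⟨a₀, a₁, b₀, b₁, c₀, c₁, d₀, d₁, ht⟩ := exists_hasTable circ b
  have hb' := hb
  simp only [cA04, v2_zero_eq] at hb'
  have h₁ := hb'.compat_apply ht hcompat ![1, 0] ![1, 0] ![1, 0]
  have h₂ := hb'.compat_apply ht hcompat ![0, 1] ![1, 0] ![1, 0]
  have h₃ := ht.preLie_apply hpre ![1, 0] ![0, 1] ![1, 0]
  simp [tm_tbl_apply, Matrix.vecCons_inj] at h₁ h₂ h₃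
  obtain ⟨rfl, hb₁⟩ := h₁
  obtain rfl : b₁ = 2 * a₀ := by grind
  obtain ⟨rfl, hd₁⟩ := h₂
  obtain rfl : d₁ = 2 * c₀ := by grind
  -- a change of basis `e₁ ↦ s e₁ + t e₂`, `e₂ ↦ s² e₂` preserves the multiplication
  have main : ∀ (i : CPIdx) (s t : ℂ), s ≠ 0 → cpMul i = cA04 →
      IsTableHom ![![s, t], ![0, s ^ 2]] (cpCirc i)
        (tbl ![a₀, a₁] ![0, 2 * a₀] ![c₀, c₁] ![0, 2 * c₀]) →
      ∃ i, Iso2 (fun x y => mul x y) (fun x y => circ x y) (tm (cpMul i)) (tm (cpCirc i)) := by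
    intro i s t hs hi hQ
    obtain ⟨b', -, -, h⟩ := exists_basis_change b (p := s) (q := t) (r := 0) (s := s ^ 2) (by simpa)
    refine ⟨i, (h mul _ _ hb' ?_).iso2 (h circ _ _ ht hQ)⟩
    simp only [hi, cA04, v2_zero_eq, isTableHom_tbl]
    grind
  rcases eq_or_ne c₀ 0 with rfl | hc₀
  · rcases eq_or_ne a₀ 0 with rfl | ha₀
    · obtain rfl : c₁ = 0 := by grind
      refine main (.c17 a₁) 1 0 one_ne_zero rfl ?_
      simp only [cpCirc, v2_zero_eq, isTableHom_tbl]
      grind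
    rcases eq_or_ne c₁ 0 with rfl | hc₁
    · refine main .c14 (1 / a₀) (-a₁ / a₀ ^ 2) (by simpa) rfl ?_
      simp only [cpCirc, v2_zero_eq, isTableHom_tbl]
      grind
    · obtain rfl : c₁ = a₀ := by grind
      refine main .c16 (1 / c₁) (-a₁ / (2 * c₁ ^ 2)) (by simpa) rfl ?_
      simp only [cpCirc, v2_zero_eq, isTableHom_tbl]
      grind
  · obtain rfl : c₁ = a₀ := by grind
    obtain ⟨τ, hτ⟩ := IsAlgClosed.exists_pow_nat_eq (c₁ ^ 2 - a₁ * c₀) two_pos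
    obtain ⟨s, hs⟩ := IsAlgClosed.exists_pow_nat_eq (1 / c₀) two_pos
    have hs₀ : s ≠ 0 := by rintro rfl; simp_all
    refine main (.c15 (s * τ)) s (s * (τ - c₁) / c₀) hs₀ rfl ?_
    simp only [cpCirc, isTableHom_tbl]
    have hs' : s ^ 2 * c₀ = 1 := by rw [hs]; field_simp
    clear hs
    grind

theorem exists_plIdx_of_comm (hdim : Module.finrank ℂ C = 2) {m : C →ₗ[ℂ] C →ₗ[ℂ] C}
    (hpre : ∀ x y z, m (m x y) z - m (m y x) z = m x (m y z) - m y (m x z))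
    (hcomm : ∀ x y, m x y = m y x) (hm : ∃ x y, m x y ≠ 0) :
    ∃ (b : Module.Basis (Fin 2) ℂ C) (i : PLIdx), HasTable m b (plAlg i) := by
  have hassoc : ∀ x y z, m (m x y) z = m x (m y z) := fun x y z => by
    have h := hpre x z y
    rw [hcomm z x, sub_self, eq_comm, sub_eq_zero] at h
    rw [hcomm _ z, ← h, hcomm z y]
  obtain ⟨b, h | h | h | h⟩ := exists_basis_of_comm_assoc hdim hcomm hassoc hm
  · exact ⟨b, .c07, h⟩
  · exact ⟨b, .c06 1, h⟩
  · refine ⟨b, .c05 0, ?_⟩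
    simpa only [plAlg, cA03, v2_zero_eq] using h
  · exact ⟨b, .c03, h⟩

theorem exists_basis_of_not_comm (hdim : Module.finrank ℂ C = 2) {m : C →ₗ[ℂ] C →ₗ[ℂ] C}
    (hcomm : ¬ ∀ x y, m x y = m y x) :
    ∃ b : Module.Basis (Fin 2) ℂ C, m (b 0) (b 1) - m (b 1) (b 0) = b 1 := by
  have : Module.Finite ℂ C := Module.finite_of_finrank_eq_succ hdim
  let b := Module.finBasisOfFinrankEq ℂ C hdim
  obtain ⟨a₀, a₁, b₀, b₁, c₀, c₁, d₀, d₁, ht⟩ := exists_hasTable m b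
  have h₀ : m (b 0) (b 1) = b₀ • b 0 + b₁ • b 1 := ht 0 1
  have h₁ : m (b 1) (b 0) = c₀ • b 0 + c₁ • b 1 := ht 1 0
  by_cases hy : b₁ - c₁ = 0
  · have hx : b₀ - c₀ ≠ 0 := fun hx => hcomm fun x y => b.equivFun.injective (by
      rw [sub_eq_zero] at hx hy
      subst hx hy
      simp only [ht.equivFun_apply, tm, tbl, Fin.sum_univ_two]
      ext k
      fin_cases k <;> simp <;> ring)
    obtain ⟨b', h0, h1, -⟩ := exists_basis_change b (p := 0) (q := -1 / (b₀ - c₀))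
      (r := b₀ - c₀) (s := b₁ - c₁) (by field_simp; simp)
    refine ⟨b', ?_⟩
    rw [h0, h1, hy]
    simp only [map_add, map_smul, LinearMap.add_apply, LinearMap.smul_apply, h₀, h₁]
    match_scalars <;> grind
  · obtain ⟨b', h0, h1, -⟩ := exists_basis_change b (p := 1 / (b₁ - c₁)) (q := 0)
      (r := b₀ - c₀) (s := b₁ - c₁) (by field_simp; simp)
    refine ⟨b', ?_⟩
    rw [h0, h1]
    simp only [map_add, map_smul, LinearMap.add_apply, LinearMap.smul_apply, h₀, h₁]
    match_scalars <;> grind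

theorem exists_plIdx_of_bracket {m : C →ₗ[ℂ] C →ₗ[ℂ] C} {b : Module.Basis (Fin 2) ℂ C}
    (hpre : ∀ x y z, m (m x y) z - m (m y x) z = m x (m y z) - m y (m x z))
    (hb : m (b 0) (b 1) - m (b 1) (b 0) = b 1) :
    ∃ (b : Module.Basis (Fin 2) ℂ C) (i : PLIdx), HasTable m b (plAlg i) := by
  obtain ⟨a₀, a₁, _, _, c₀, c₁, d₀, d₁, ht⟩ := exists_hasTable m b
  replace ht : HasTable m b (tbl ![a₀, a₁] ![c₀, c₁ + 1] ![c₀, c₁] ![d₀, d₁]) := by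
    refine hasTable_of_mul_eq (ht 0 0) ?_ (ht 1 0) (ht 1 1)
    have h₁ : m (b 1) (b 0) = c₀ • b 0 + c₁ • b 1 := ht 1 0
    rw [eq_add_of_sub_eq hb, h₁]
    module
  have h₁ := ht.preLie_apply hpre ![1, 0] ![0, 1] ![1, 0]
  have h₂ := ht.preLie_apply hpre ![1, 0] ![0, 1] ![0, 1]
  simp [tm_tbl_apply, Matrix.vecCons_inj] at h₁ h₂
  have main : ∀ (i : PLIdx) (p q r s : ℂ), p * s - q * r ≠ 0 →
      IsTableHom ![![p, q], ![r, s]] (plAlg i)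
        (tbl ![a₀, a₁] ![c₀, c₁ + 1] ![c₀, c₁] ![d₀, d₁]) →
      ∃ (b : Module.Basis (Fin 2) ℂ C) (i : PLIdx), HasTable m b (plAlg i) := by
    intro i p q r s hdet hQ
    obtain ⟨b', -, -, h⟩ := exists_basis_change b hdet
    exact ⟨b', i, h m _ _ ht hQ⟩
  have hg : d₁ = -c₀ := by grind
  subst hg
  by_cases hd : d₀ = 0
  · obtain ⟨rfl⟩ := hd
    obtain rfl : c₀ = 0 := by grind
    rcases eq_or_ne c₁ 0 with rfl | hc
    · rcases eq_or_ne a₀ 0 with rfl | ha₀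
      · refine main .c04 0 1 1 (-a₁) (by simp) ?_
        simp only [plAlg, v2_zero_eq, isTableHom_tbl]
        grind
      rcases eq_or_ne a₀ 1 with rfl | ha₁
      · rcases eq_or_ne a₁ 0 with rfl | ha
        · refine main (.c05 1) 1 0 0 1 (by simp) ?_
          simp only [plAlg, v2_zero_eq, isTableHom_tbl]
          grind
        · refine main .c02 1 0 0 a₁ (by simpa) ?_
          simp only [plAlg, v2_zero_eq, isTableHom_tbl]
          grind
      · have : a₀ - 1 ≠ 0 := sub_ne_zero.mpr ha₁
        refine main (.c05 (1 / a₀)) (1 / a₀) (a₁ / (a₀ - 1) / a₀) 0 1 (by simpa) ?_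
        simp only [plAlg, v2_zero_eq, isTableHom_tbl]
        grind
    · obtain rfl : c₁ = a₀ := by grind
      rcases eq_or_ne c₁ (-1) with rfl | hc'
      · rcases eq_or_ne a₁ 0 with rfl | ha
        · refine main (.c06 0) (-1) 0 0 1 (by simp) ?_
          simp only [plAlg, v2_zero_eq, isTableHom_tbl]
          grind
        · refine main .c01 (-1) 0 0 a₁ (by simpa) ?_
          simp only [plAlg, v2_zero_eq, isTableHom_tbl]
          grind
      · have : c₁ + 1 ≠ 0 := fun h => hc' (eq_neg_of_add_eq_zero_left h)
        refine main (.c06 ((1 + c₁) / c₁)) (1 / c₁) (-a₁ / (c₁ + 1) / c₁) 0 1 (by simpa) ?_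
        simp only [plAlg, v2_zero_eq, isTableHom_tbl]
        grind
  · obtain ⟨k, hk⟩ := IsAlgClosed.exists_pow_nat_eq (-1 / d₀) two_pos
    have hk' : k ^ 2 * d₀ = -1 := by rw [hk]; field_simp
    have hk₀ : k ≠ 0 := by rintro rfl; simp at hk'
    refine main .c08 1 (-c₀ / d₀ - k) (1 / 2) (-c₀ / (2 * d₀)) ?_ ?_
    · convert div_ne_zero hk₀ two_ne_zero using 1
      field_simp
      ring
    · clear hk
      simp only [plAlg, isTableHom_tbl]
      grind

theorem exists_plIdx (hdim : Module.finrank ℂ C = 2) {m : C →ₗ[ℂ] C →ₗ[ℂ] C}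
    (hpre : ∀ x y z, m (m x y) z - m (m y x) z = m x (m y z) - m y (m x z))
    (hm : ∃ x y, m x y ≠ 0) :
    ∃ (b : Module.Basis (Fin 2) ℂ C) (i : PLIdx), HasTable m b (plAlg i) := by
  by_cases hcomm : ∀ x y, m x y = m y x
  · exact exists_plIdx_of_comm hdim hpre hcomm hm
  · obtain ⟨b, hb⟩ := exists_basis_of_not_comm hdim hcomm
    exact exists_plIdx_of_bracket hpre hb

end Tables

theorem iso2_c15_neg (α : ℂ) : Iso2 (tm (cpMul (.c15 α))) (tm (cpCirc (.c15 α)))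
    (tm (cpMul (.c15 (-α)))) (tm (cpCirc (.c15 (-α)))) := by
  let φ : V2 →ₗ[ℂ] V2 :=
    { toFun := fun x => ![-x 0, x 1]
      map_add' := fun x y => by ext k; fin_cases k <;> simp [add_comm]
      map_smul' := fun r x => by ext k; fin_cases k <;> simp }
  refine ⟨LinearEquiv.ofInvolutive φ fun x => by ext k; fin_cases k <;> simp [φ], ?_, ?_⟩ <;>
  · intro x y
    change φ _ = tm _ (φ x) (φ y)
    ext k
    fin_cases k <;> simp [φ, tm, tbl, cpMul, cpCirc, cA04, Fin.sum_univ_two] <;> ring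

theorem eq_or_eq_c15_neg_of_iso2 {i j : CPIdx}
    (h : Iso2 (tm (cpMul i)) (tm (cpCirc i)) (tm (cpMul j)) (tm (cpCirc j))) :
    i = j ∨ ∃ α : ℂ, i = .c15 α ∧ j = .c15 (-α) := by
  obtain ⟨p, q, r, s, hdet, h₁, h₂⟩ := h.exists_isTableHom
  cases i <;> cases j <;>
    simp only [cpMul, cpCirc, cA01, cA02, cA03, cA04, v2_zero_eq, isTableHom_tbl] at h₁ h₂ <;>
    simp at h₁ h₂ ⊢ <;> grind

/-- Every nonzero 2-dimensional commutative pre-Lie algebra over ℂ is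
isomorphic to one of the pre-Lie algebras C01–C08 (with `· ≡ 0`) or to one of C09–C17;
moreover among C09–C17 the only nontrivial isomorphism is `C15^α ≅ C15^{-α}`. -/
theorem statement14 (C : Type*) [AddCommGroup C] [Module ℂ C]
    (hdim : Module.finrank ℂ C = 2)
    (mul circ : C →ₗ[ℂ] C →ₗ[ℂ] C)
    (hcomm : ∀ x y : C, mul x y = mul y x)
    (hassoc : ∀ x y z : C, mul (mul x y) z = mul x (mul y z))
    (hpre : ∀ x y z : C, circ (circ x y) z - circ (circ y x) z =
      circ x (circ y z) - circ y (circ x z))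
    (hcompat : ∀ x y z : C, circ x (mul y z) = mul (circ x y) z + mul y (circ x z))
    (hnz : (∃ x y : C, mul x y ≠ 0) ∨ (∃ x y : C, circ x y ≠ 0)) :
    ((∃ i : PLIdx, Iso2 (fun x y => mul x y) (fun x y => circ x y)
        zm (tm (plAlg i))) ∨
     (∃ i : CPIdx, Iso2 (fun x y => mul x y) (fun x y => circ x y)
        (tm (cpMul i)) (tm (cpCirc i)))) ∧
    (∀ α : ℂ, Iso2 (tm (cpMul (.c15 α))) (tm (cpCirc (.c15 α)))
        (tm (cpMul (.c15 (-α)))) (tm (cpCirc (.c15 (-α))))) ∧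
    (∀ i j : CPIdx, Iso2 (tm (cpMul i)) (tm (cpCirc i)) (tm (cpMul j)) (tm (cpCirc j)) →
        i = j ∨ ∃ α : ℂ, i = .c15 α ∧ j = .c15 (-α)) := by
  refine ⟨?_, iso2_c15_neg, fun i j => eq_or_eq_c15_neg_of_iso2⟩
  by_cases hm : ∃ x y, mul x y ≠ 0
  · right
    obtain ⟨b, h | h | h | h⟩ := exists_basis_of_comm_assoc hdim hcomm hassoc hm
    · exact exists_cpIdx_of_cA01 hcompat h
    · exact exists_cpIdx_of_cA02 hpre hcompat h
    · exact exists_cpIdx_of_cA03 hpre hcompat h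
    · exact exists_cpIdx_of_cA04 hpre hcompat h
  · left
    obtain ⟨b, i, h⟩ := exists_plIdx hdim hpre (hnz.resolve_left hm)
    push Not at hm
    have h0 : HasTable mul b (tbl 0 0 0 0) := by
      simp only [v2_zero_eq]
      apply hasTable_of_mul_eq <;> simp [hm]
    exact ⟨i, tm_zero ▸ h0.iso2 h⟩
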